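/- For every s ≥ 3 there exist s flat fat points of multiplicity 3 in ℙ² with pairwise distinct support points, with ideals J₁,…,J_s (each Jᵢ = (ℓᵢ³, ℓᵢ′) with ℓᵢ, ℓᵢ′ linearly independent linear forms), such that the ideal J = J₁ ∩ … ∩ J_s satisfies dim_K [S/J]_j = min{3s, binom(j+2,2)} for all j ≥ 0; i.e., a general union of s ≥ 3 flat fat points of multiplicity 3 in ℙ² has generic Hilbert function. -/

import Mathlib

/-!
The supports are taken at `(t i : i : 1)` and the flat fat points on the lines `X₁ = i X₂`, which
all pass through `(1 : 0 : 0)`; the parameters `t i` are chosen one after the other. A form `F` lies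
in the `i`-th ideal `((X₀ - t i X₂)³, X₁ - i X₂)` exactly when its restriction to the `i`-th line
vanishes to order three at `t i` (`mem_span_iff`).

Let `v s j` be the dimension of the system `sys t s j` of forms of degree `j` vanishing on the first
`s` flat fat points. The new line `X₁ = s X₂` avoids the previous supports, so the members of the
system containing it form a copy of `sys t s (j - 1)` (`finrank_sys_inf_ker_succ`). Hence the system
restricts to a space of univariate polynomials of dimension `v s j - v s (j - 1)`. In characteristic
zero a space of polynomials of dimension `r` has exactly `min 3 r` independent `2`-jets at a general
point, because the Wronskian of polynomials of distinct degrees is nonzero (its top coefficient is a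
Vandermonde determinant in the degrees). For a general choice of `t s` this gives
`v (s + 1) j = max (v s (j - 1)) (v s j - 3)`, with truncated subtraction. One value of `t s` serves
all degrees, since once a restricted system surjects onto the jets all later ones do
(`exists_jet_point`). Solving the recursion gives `v s j = (j + 2).choose 2 - 3 * s` except for
`s = j = 1` and `s = j = 2`.
-/
open MvPolynomial Module

noncomputable section

/-! ### Jets of univariate polynomials at a general point -/

section Univariate

variable {K : Type} [Field K]

/-- The `2`-jet at `t`: the first three Taylor coefficients of a polynomial at `t`. -/
def jet (t : K) : Polynomial K →ₗ[K] (Fin 3 → K) :=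
  LinearMap.pi fun k => Polynomial.lcoeff K (k : ℕ) ∘ₗ Polynomial.taylor t

lemma jet_apply (t : K) (p : Polynomial K) (k : Fin 3) :
    jet t p k = (Polynomial.hasseDeriv (k : ℕ) p).eval t := by
  simp [jet, Polynomial.taylor_coeff]

lemma mem_ker_jet {t : K} {p : Polynomial K} :
    p ∈ LinearMap.ker (jet t) ↔ (Polynomial.X - Polynomial.C t) ^ 3 ∣ p := by
  rw [Polynomial.X_sub_C_pow_dvd_iff, Polynomial.X_pow_dvd_iff, LinearMap.mem_ker, funext_iff]
  constructor
  · intro h d hd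
    simpa [jet, Polynomial.taylor_apply] using h ⟨d, hd⟩
  · intro h k
    simpa [jet, Polynomial.taylor_apply] using h k k.2

lemma finrank_map_add_finrank_inf_ker {V W : Type*} [AddCommGroup V] [Module K V]
    [AddCommGroup W] [Module K W] (f : V →ₗ[K] W) (A : Submodule K V) [Module.Finite K A] :
    finrank K (A.map f) + finrank K ↥(A ⊓ LinearMap.ker f) = finrank K A := by
  rw [← LinearMap.finrank_range_add_finrank_ker (f.domRestrict A), LinearMap.range_domRestrict,
    LinearMap.ker_domRestrict, ← Submodule.finrank_map_subtype_eq, ← LinearMap.ker_domRestrict,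
    LinearMap.ker_domRestrict, Submodule.map_comap_subtype]

/-- The Euler-type operator `p ↦ X ^ k * (hasseDeriv k p)` is diagonal on monomials. -/
lemma coeff_X_pow_mul_hasseDeriv (k n : ℕ) (p : Polynomial K) :
    (Polynomial.X ^ k * Polynomial.hasseDeriv k p).coeff n = n.choose k * p.coeff n := by
  rw [Polynomial.coeff_X_pow_mul']
  split_ifs with h
  · rw [Polynomial.hasseDeriv_coeff, Nat.sub_add_cancel h]
  · rw [Nat.choose_eq_zero_of_lt (by omega)]; simp

lemma natDegree_X_pow_mul_hasseDeriv_le (k : ℕ) (p : Polynomial K) :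
    (Polynomial.X ^ k * Polynomial.hasseDeriv k p).natDegree ≤ p.natDegree := by
  rw [Polynomial.natDegree_le_iff_coeff_eq_zero]
  intro n hn
  rw [coeff_X_pow_mul_hasseDeriv, Polynomial.coeff_eq_zero_of_natDegree_lt hn, mul_zero]

/-- The matrix of Euler-type derivatives; its determinant is a scaled Wronskian. -/
def eulerMatrix (w : Fin 3 → Polynomial K) : Matrix (Fin 3) (Fin 3) (Polynomial K) :=
  Matrix.of fun i k => Polynomial.X ^ (k : ℕ) * Polynomial.hasseDeriv (k : ℕ) (w i)

/-- The top coefficient of a `3 × 3` determinant whose `i`-th row has degree at most `d i`. -/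
lemma coeff_det_of_natDegree_le (M : Matrix (Fin 3) (Fin 3) (Polynomial K)) (d : Fin 3 → ℕ)
    (h : ∀ i k, (M i k).natDegree ≤ d i) :
    M.det.coeff (d 0 + d 1 + d 2) = (Matrix.of fun i k => (M i k).coeff (d i)).det := by
  have key : ∀ a b c, (M 0 a * M 1 b * M 2 c).coeff (d 0 + d 1 + d 2) =
      (M 0 a).coeff (d 0) * (M 1 b).coeff (d 1) * (M 2 c).coeff (d 2) := by
    intro a b c
    rw [Polynomial.coeff_mul_add_eq_of_natDegree_le
      (Polynomial.natDegree_mul_le_of_le (h 0 a) (h 1 b)) (h 2 c),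
      Polynomial.coeff_mul_add_eq_of_natDegree_le (h 0 a) (h 1 b)]
  rw [Matrix.det_fin_three, Matrix.det_fin_three]
  simp only [Polynomial.coeff_add, Polynomial.coeff_sub, key, Matrix.of_apply]

/-- In characteristic zero, polynomials of distinct degrees have nonzero (scaled) Wronskian,
since its top coefficient is a Vandermonde determinant in the degrees. -/
lemma det_eulerMatrix_ne_zero [CharZero K] (w : Fin 3 → Polynomial K) (hw : ∀ i, w i ≠ 0)
    (h01 : (w 0).natDegree < (w 1).natDegree) (h12 : (w 1).natDegree < (w 2).natDegree) :
    (eulerMatrix w).det ≠ 0 := by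
  intro h0
  have h := coeff_det_of_natDegree_le (eulerMatrix w) (fun i => (w i).natDegree)
    (fun i k => natDegree_X_pow_mul_hasseDeriv_le k (w i))
  rw [h0, Matrix.det_fin_three] at h
  simp only [eulerMatrix, Matrix.of_apply, coeff_X_pow_mul_hasseDeriv, Polynomial.coeff_zero,
    Polynomial.coeff_natDegree, Fin.val_zero, Fin.val_one, Fin.val_two, Nat.choose_zero_right,
    Nat.choose_one_right, Nat.cast_choose_two] at h
  have hl : ∀ i, (w i).leadingCoeff ≠ 0 := fun i => Polynomial.leadingCoeff_ne_zero.2 (hw i)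
  have e01 : ((w 1).natDegree : K) - (w 0).natDegree ≠ 0 :=
    sub_ne_zero.2 (by exact_mod_cast h01.ne')
  have e12 : ((w 2).natDegree : K) - (w 1).natDegree ≠ 0 :=
    sub_ne_zero.2 (by exact_mod_cast h12.ne')
  have e02 : ((w 2).natDegree : K) - (w 0).natDegree ≠ 0 :=
    sub_ne_zero.2 (by exact_mod_cast (h01.trans h12).ne')
  refine mul_ne_zero (mul_ne_zero (mul_ne_zero (hl 0) (hl 1)) (hl 2))
    (mul_ne_zero (mul_ne_zero e01 e12) e02) ?_
  have h2 : (2 : K) ≠ 0 := two_ne_zero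
  field_simp at h
  linear_combination -h

lemma linearIndependent_jet (w : Fin 3 → Polynomial K) (t : K)
    (ht : (eulerMatrix w).det.eval t ≠ 0) : LinearIndependent K fun i => jet t (w i) := by
  rw [Fintype.linearIndependent_iff]
  intro c hc
  have hd : ((eulerMatrix w).map (Polynomial.eval t)).det ≠ 0 := by
    have := RingHom.map_det (Polynomial.evalRingHom t) (eulerMatrix w)
    rw [Polynomial.coe_evalRingHom] at this
    rw [this] at ht
    exact ht
  have : c = 0 := by
    refine Matrix.eq_zero_of_vecMul_eq_zero hd ?_
    ext k
    have hk := congrFun hc k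
    simp only [Finset.sum_apply, Pi.smul_apply, jet_apply, smul_eq_mul, Pi.zero_apply] at hk
    simp only [Matrix.vecMul, dotProduct, Matrix.map_apply, eulerMatrix, Matrix.of_apply,
      Polynomial.eval_mul, Polynomial.eval_pow, Polynomial.eval_X, Pi.zero_apply]
    calc _ = t ^ (k : ℕ) * ∑ i, c i * (Polynomial.hasseDeriv (k : ℕ) (w i)).eval t := by
            rw [Finset.mul_sum]; exact Finset.sum_congr rfl fun i _ => by ring
      _ = 0 := by rw [hk, mul_zero]
  exact fun i => congrFun this i

/-- A nonzero space of polynomials contains an element of top degree `d`; the elements of degree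
less than `d` form a hyperplane in it. -/
lemma exists_top_degree (W : Submodule K (Polynomial K)) [Module.Finite K W]
    (hW : 0 < finrank K W) :
    ∃ w ∈ W, w ≠ 0 ∧ ∃ W' ≤ W, (∀ p ∈ W', p.degree < w.degree) ∧
      finrank K W ≤ finrank K W' + 1 := by
  obtain ⟨S, hS⟩ := (Module.Finite.iff_fg.1 (inferInstance : Module.Finite K W))
  -- finitely generated, so the degrees are bounded
  have hb : ∃ n, W ≤ Polynomial.degreeLT K n := by
    refine ⟨S.sup Polynomial.natDegree + 1, ?_⟩
    rw [← hS, Submodule.span_le]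
    intro p hp
    rw [SetLike.mem_coe, Polynomial.mem_degreeLT]
    refine Polynomial.degree_le_natDegree.trans_lt ?_
    have : p.natDegree ≤ S.sup Polynomial.natDegree := Finset.le_sup hp
    exact_mod_cast Nat.lt_succ_of_le this
  classical
  let n := Nat.find hb
  have hn : W ≤ Polynomial.degreeLT K n := Nat.find_spec hb
  have hn0 : n ≠ 0 := by
    intro h0
    rw [h0] at hn
    have : W = ⊥ := by
      rw [eq_bot_iff]; intro p hp
      have := Polynomial.mem_degreeLT.1 (hn hp)
      simpa using this
    rw [this] at hW
    simp at hW
  have hlt : ¬ W ≤ Polynomial.degreeLT K (n - 1) := Nat.find_min hb (by omega)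
  obtain ⟨w, hwW, hw⟩ := SetLike.not_le_iff_exists.1 hlt
  rw [Polynomial.mem_degreeLT, not_lt] at hw
  have hw0 : w ≠ 0 := by rintro rfl; simp at hw
  have hwd : w.degree = ((n - 1 : ℕ) : WithBot ℕ) := by
    refine le_antisymm ?_ hw
    have := Polynomial.mem_degreeLT.1 (hn hwW)
    rw [Polynomial.degree_eq_natDegree hw0] at this ⊢
    have : w.natDegree < n := by exact_mod_cast this
    exact_mod_cast (by omega : w.natDegree ≤ n - 1)
  refine ⟨w, hwW, hw0, W ⊓ LinearMap.ker (Polynomial.lcoeff K (n - 1)), inf_le_left, ?_, ?_⟩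
  · rintro p ⟨hp, hp0⟩
    have hpn := Polynomial.mem_degreeLT.1 (hn hp)
    rw [hwd, Polynomial.degree_lt_iff_coeff_zero]
    rw [Polynomial.degree_lt_iff_coeff_zero] at hpn
    intro m hm
    rcases hm.eq_or_lt with rfl | h
    · simpa using hp0
    · exact hpn m (by omega)
  · rw [← finrank_map_add_finrank_inf_ker (Polynomial.lcoeff K (n - 1)) W]
    have := Submodule.finrank_le (W.map (Polynomial.lcoeff K (n - 1)))
    rw [finrank_self] at this
    omega

/-- A space of dimension at least three contains three elements of distinct degrees. -/
lemma exists_three_degrees (W : Submodule K (Polynomial K)) [Module.Finite K W]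
    (hW : 3 ≤ finrank K W) :
    ∃ w : Fin 3 → Polynomial K, (∀ i, w i ∈ W) ∧ (∀ i, w i ≠ 0) ∧
      (w 0).natDegree < (w 1).natDegree ∧ (w 1).natDegree < (w 2).natDegree := by
  obtain ⟨w₂, h₂, h₂0, W₂, hW₂, d₂, f₂⟩ := exists_top_degree W (by omega)
  have := Submodule.finiteDimensional_of_le hW₂
  obtain ⟨w₁, h₁, h₁0, W₁, hW₁, d₁, f₁⟩ := exists_top_degree W₂ (by omega)
  have := Submodule.finiteDimensional_of_le hW₁
  obtain ⟨w₀, h₀, h₀0, -⟩ := exists_top_degree W₁ (by omega)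
  refine ⟨![w₀, w₁, w₂], ?_, ?_, ?_, ?_⟩
  · intro i; fin_cases i
    exacts [hW₂ (hW₁ h₀), hW₂ h₁, h₂]
  · intro i; fin_cases i
    exacts [h₀0, h₁0, h₂0]
  · exact Polynomial.natDegree_lt_natDegree h₀0 (d₁ _ h₀)
  · exact Polynomial.natDegree_lt_natDegree h₁0 (d₂ _ h₁)

lemma finrank_map_jet_le (W : Submodule K (Polynomial K)) (t : K) :
    finrank K (W.map (jet t)) ≤ 3 := by
  simpa using Submodule.finrank_le (W.map (jet t))

lemma finrank_map_jet_eq_three [CharZero K] (W : Submodule K (Polynomial K)) [Module.Finite K W]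
    (hW : 3 ≤ finrank K W) :
    ∃ D : Polynomial K, D ≠ 0 ∧ ∀ t, D.eval t ≠ 0 → finrank K (W.map (jet t)) = 3 := by
  obtain ⟨w, hw, hw0, h01, h12⟩ := exists_three_degrees W hW
  refine ⟨_, det_eulerMatrix_ne_zero w hw0 h01 h12, fun t ht => ?_⟩
  refine le_antisymm (finrank_map_jet_le W t) ?_
  have hli := linearIndependent_jet w t ht
  refine (le_of_eq ((finrank_span_eq_card hli).trans (Fintype.card_fin 3)).symm).trans ?_
  refine Submodule.finrank_mono (Submodule.span_le.2 ?_)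
  rintro _ ⟨i, rfl⟩
  exact Submodule.mem_map_of_mem (hw i)

/-- In a space of dimension at most three, no nonzero element vanishes to order three at a general
point. The induction enlarges the space until its dimension is three. -/
lemma inf_ker_jet_eq_bot [CharZero K] (k : ℕ) : ∀ (W : Submodule K (Polynomial K))
    [Module.Finite K W], finrank K W + k = 3 →
    ∃ D : Polynomial K, D ≠ 0 ∧ ∀ t, D.eval t ≠ 0 → W ⊓ LinearMap.ker (jet t) = ⊥ := by
  induction k with
  | zero =>
    intro W _ hW
    obtain ⟨D, hD, h⟩ := finrank_map_jet_eq_three W (by omega)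
    refine ⟨D, hD, fun t ht => ?_⟩
    have h1 := finrank_map_add_finrank_inf_ker (jet t) W
    have := h t ht
    exact Submodule.finrank_eq_zero.1 (by omega)
  | succ k ih =>
    intro W _ hW
    -- a finite-dimensional space of polynomials is never everything, so it can be enlarged
    have hne : ∃ u, u ∉ W := by
      by_contra! h
      have : W = ⊤ := eq_top_iff.2 fun x _ => h x
      subst this
      exact Polynomial.not_finite (R := K)
        (Module.Finite.equiv (Submodule.topEquiv (R := K) (M := Polynomial K)))
    obtain ⟨u, hu⟩ := hne
    have hf : finrank K ↥(W ⊔ Submodule.span K {u}) = finrank K W + 1 := by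
      have hu0 : u ≠ 0 := fun h => hu (h ▸ W.zero_mem)
      have h := Submodule.finrank_sup_add_finrank_inf_eq W (Submodule.span K {u})
      rw [(Submodule.disjoint_span_singleton_of_notMem hu).eq_bot, finrank_bot,
        finrank_span_singleton hu0] at h
      exact h
    obtain ⟨D, hD, h⟩ := ih (W ⊔ Submodule.span K {u}) (by omega)
    exact ⟨D, hD, fun t ht => eq_bot_iff.2 <| (h t ht) ▸ inf_le_inf_right _ le_sup_left⟩

/-- At a general point, a space of polynomials imposes the expected number of conditions on
vanishing to order three (the subtraction is truncated). -/
lemma finrank_inf_ker_jet [CharZero K] (W : Submodule K (Polynomial K)) [Module.Finite K W] :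
    ∃ D : Polynomial K, D ≠ 0 ∧ ∀ t, D.eval t ≠ 0 →
      finrank K ↥(W ⊓ LinearMap.ker (jet t)) = finrank K W - 3 := by
  rcases le_total 3 (finrank K W) with h3 | h3
  · obtain ⟨D, hD, h⟩ := finrank_map_jet_eq_three W h3
    refine ⟨D, hD, fun t ht => ?_⟩
    have := finrank_map_add_finrank_inf_ker (jet t) W
    have := h t ht
    omega
  · obtain ⟨D, hD, h⟩ := inf_ker_jet_eq_bot (3 - finrank K W) W (by omega)
    refine ⟨D, hD, fun t ht => ?_⟩
    rw [h t ht, finrank_bot]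
    omega

/-- For an increasing sequence of spaces of polynomials, one point works for all of them: once
a member surjects onto the jets, so do all later ones. -/
lemma exists_jet_point [CharZero K] (W : ℕ → Submodule K (Polynomial K))
    [∀ j, Module.Finite K (W j)] (hmono : Monotone W) (M : ℕ) (hM : 3 ≤ finrank K (W M)) :
    ∃ t : K, ∀ j, finrank K ↥(W j ⊓ LinearMap.ker (jet t)) = finrank K (W j) - 3 := by
  choose D hD h using fun j => finrank_inf_ker_jet (W j)
  have hP : ∏ j ∈ Finset.range (M + 1), D j ≠ 0 := Finset.prod_ne_zero_iff.2 fun j _ => hD j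
  obtain ⟨t, ht⟩ : ∃ t, (∏ j ∈ Finset.range (M + 1), D j).eval t ≠ 0 := by
    by_contra! h0
    exact hP (Polynomial.funext fun t => by simpa using h0 t)
  rw [Polynomial.eval_prod, Finset.prod_ne_zero_iff] at ht
  refine ⟨t, fun j => ?_⟩
  rcases le_or_gt j M with hj | hj
  · exact h j t (ht j (Finset.mem_range.2 (by omega)))
  · have h1 := h M t (ht M (Finset.mem_range.2 (by omega)))
    have h2 := finrank_map_add_finrank_inf_ker (jet t) (W M)
    have h3 := finrank_map_add_finrank_inf_ker (jet t) (W j)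
    have h4 := Submodule.finrank_mono (Submodule.map_mono (f := jet t) (hmono hj.le))
    have h5 := finrank_map_jet_le (W j) t
    omega

end Univariate

/-! ### Restricting forms to the lines `X₁ = a X₂` -/

section Restriction

variable {K : Type} [Field K]

/-- Restriction of a form to the line `X₁ = a X₂`, in the affine coordinate `X₀ / X₂`. -/
def restr (a : K) : MvPolynomial (Fin 3) K →ₐ[K] Polynomial K :=
  aeval ![Polynomial.X, Polynomial.C a, 1]

/-- The linear form `X₁ - a X₂`. -/
def lineForm (a : K) : MvPolynomial (Fin 3) K := X 1 - C a * X 2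

/-- The linear form `X₀ - t X₂`, a local parameter on the line `X₁ = a X₂`. -/
def ptForm (t : K) : MvPolynomial (Fin 3) K := X 0 - C t * X 2

lemma lineForm_mem (a : K) : lineForm a ∈ homogeneousSubmodule (Fin 3) K 1 :=
  (isHomogeneous_X K 1).sub (isHomogeneous_C_mul_X a 2)

lemma ptForm_mem (t : K) : ptForm t ∈ homogeneousSubmodule (Fin 3) K 1 :=
  (isHomogeneous_X K 0).sub (isHomogeneous_C_mul_X t 2)

lemma restr_lineForm (a b : K) : restr b (lineForm a) = Polynomial.C (b - a) := by
  simp [restr, lineForm]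

lemma restr_ptForm (a t : K) : restr a (ptForm t) = Polynomial.X - Polynomial.C t := by
  simp [restr, ptForm]

lemma linearIndependent_forms (a t : K) : LinearIndependent K ![ptForm t, lineForm a] := by
  rw [LinearIndependent.pair_iff]
  intro c d h
  have h0 := congrArg (aeval (![1, 0, 0] : Fin 3 → K)) h
  have h1 := congrArg (aeval (![0, 1, 0] : Fin 3 → K)) h
  simp [ptForm, lineForm] at h0 h1
  exact ⟨h0, h1⟩

/-- Modulo `X₁ - a X₂`, a form of degree `j` is the homogenization of its restriction. -/
lemma lineForm_dvd_sub (a : K) {j : ℕ} {F : MvPolynomial (Fin 3) K}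
    (hF : F ∈ homogeneousSubmodule (Fin 3) K j) :
    lineForm a ∣ F - aeval ![X 0, X 2] ((restr a F).homogenize j) := by
  have hφ : (restr a F).homogenize j =
      aeval (![X 0, C a * X 1, X 1] : Fin 3 → MvPolynomial (Fin 2) K) F := by
    apply Polynomial.homogenize_eq_of_isHomogeneous
    · have := IsHomogeneous.aeval (R := K) hF (![X 0, C a * X 1, X 1] : Fin 3 → MvPolynomial (Fin 2) K)
        (n := 1) (by
          intro i; fin_cases i
          exacts [isHomogeneous_X K 0, isHomogeneous_C_mul_X a 1, isHomogeneous_X K 1])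
      simpa using this
    · rw [← AlgHom.comp_apply]
      congr 1
      ext i : 1
      fin_cases i <;> simp [restr]
  rw [hφ, ← Ideal.mem_span_singleton, ← Ideal.Quotient.eq]
  let I := Ideal.span {lineForm a}
  have h12 : Ideal.Quotient.mk I (X 1) = Ideal.Quotient.mk I (C a * X 2) := by
    rw [Ideal.Quotient.eq]; exact Ideal.mem_span_singleton_self _
  have : Ideal.Quotient.mkₐ K I = ((Ideal.Quotient.mkₐ K I).comp
      (aeval ![X 0, X 2])).comp
      (aeval (![X 0, C a * X 1, X 1] : Fin 3 → MvPolynomial (Fin 2) K)) := by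
    ext i : 1
    fin_cases i
    · simp
    · simpa using h12
    · simp
  exact congrArg (fun f => f F) this

lemma natDegree_restr_le (a : K) {j : ℕ} {F : MvPolynomial (Fin 3) K}
    (hF : F ∈ homogeneousSubmodule (Fin 3) K j) : (restr a F).natDegree ≤ j := by
  rw [restr, aeval_def, eval₂_eq']
  refine Polynomial.natDegree_sum_le_of_forall_le _ _ fun d hd => ?_
  have hdj : d.degree = j := by
    by_contra h
    exact (mem_support_iff.1 hd) (IsHomogeneous.coeff_eq_zero hF h)
  rw [← Polynomial.C_eq_algebraMap]
  refine (Polynomial.natDegree_C_mul_le _ _).trans ?_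
  rw [Fin.prod_univ_three]
  simp only [Matrix.cons_val_zero, Matrix.cons_val_one, Matrix.cons_val, one_pow, mul_one,
    ← Polynomial.C_pow]
  refine (Polynomial.natDegree_mul_C_le _ _).trans ?_
  rw [Polynomial.natDegree_X_pow, ← hdj]
  exact Finsupp.le_degree 0 d

/-- For forms, membership in the ideal of the flat fat point supported at `(t : a : 1)` on the line
`X₁ = a X₂` is divisibility of the restriction to that line by `(X - t) ^ 3`. -/
lemma mem_span_iff (a t : K) {j : ℕ} {F : MvPolynomial (Fin 3) K}
    (hF : F ∈ homogeneousSubmodule (Fin 3) K j) :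
    F ∈ Ideal.span {ptForm t ^ 3, lineForm a} ↔
      (Polynomial.X - Polynomial.C t) ^ 3 ∣ restr a F := by
  constructor
  · rw [Ideal.mem_span_pair]
    rintro ⟨p, q, rfl⟩
    rw [map_add, map_mul, map_mul, map_pow, restr_ptForm, restr_lineForm, sub_self,
      Polynomial.C_0, mul_zero, add_zero]
    exact dvd_mul_left _ _
  · intro h
    obtain ⟨G, hG⟩ := lineForm_dvd_sub a hF
    have hd := natDegree_restr_le a hF
    obtain ⟨q, hq⟩ := h
    -- homogenization is multiplicative, and turns `X - t` into `X₀ - t X₂`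
    have hpow : ptForm t ^ 3 ∣ aeval ![X 0, X 2] ((restr a F).homogenize j) := by
      rcases eq_or_ne q 0 with rfl | hq0
      · simp [hq]
      have h3 : ((Polynomial.X - Polynomial.C t) ^ 3).natDegree = 3 := by
        rw [Polynomial.natDegree_pow, Polynomial.natDegree_X_sub_C]
      have hqd : 3 + q.natDegree ≤ j := by
        rw [hq, ((Polynomial.monic_X_sub_C t).pow 3).natDegree_mul' hq0, h3] at hd
        exact hd
      have hj : j = 1 + 1 + 1 + (j - 3) := by omega
      have h1 : (Polynomial.X - Polynomial.C t).natDegree ≤ 1 := by simp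
      have h2 := Polynomial.natDegree_mul_le_of_le h1 h1
      have h3 := Polynomial.natDegree_mul_le_of_le h2 h1
      rw [hq, hj, pow_three' (Polynomial.X - Polynomial.C t), Polynomial.homogenize_mul _ _ h3 (by omega),
        Polynomial.homogenize_mul _ _ h2 h1, Polynomial.homogenize_mul _ _ h1 h1, map_mul]
      have he : aeval (![X 0, X 2] : Fin 2 → MvPolynomial (Fin 3) K)
          ((Polynomial.X - Polynomial.C t).homogenize 1) = ptForm t := by
        simp [Polynomial.homogenize_X, ptForm, ← MvPolynomial.algebraMap_eq]
      rw [map_mul, map_mul, he, ← pow_three']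
      exact dvd_mul_right _ _
    obtain ⟨H, hH⟩ := hpow
    rw [Ideal.mem_span_pair]
    exact ⟨H, G, by linear_combination -hH - hG⟩

end Restriction

/-! ### Dimensions of the linear systems -/

section System

variable {K : Type} [Field K]

/-- The forms of degree `j` vanishing on the flat fat points supported at `(t i : i : 1)` on the
lines `X₁ = i X₂`, for `i < s`. -/
def sys (t : ℕ → K) (s j : ℕ) : Submodule K (MvPolynomial (Fin 3) K) :=
  homogeneousSubmodule (Fin 3) K j ⊓
    ⨅ i < s, (LinearMap.ker (jet (t i))).comap (restr (i : K)).toLinearMap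

lemma mem_sys {t : ℕ → K} {s j : ℕ} {F : MvPolynomial (Fin 3) K} :
    F ∈ sys t s j ↔ F ∈ homogeneousSubmodule (Fin 3) K j ∧
      ∀ i < s, (Polynomial.X - Polynomial.C (t i)) ^ 3 ∣ restr (i : K) F := by
  simp only [sys, Submodule.mem_inf, Submodule.mem_iInf, Submodule.mem_comap, mem_ker_jet]
  rfl

instance (j : ℕ) : Module.Finite K (homogeneousSubmodule (Fin 3) K j) :=
  Module.Finite.iff_fg.2 (homogeneousSubmodule_fg _ _ j)

instance (t : ℕ → K) (s j : ℕ) : Module.Finite K (sys t s j) :=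
  Submodule.finiteDimensional_of_le (inf_le_left : _ ≤ homogeneousSubmodule (Fin 3) K j)

attribute [local instance] MvPolynomial.gradedAlgebra in
/-- A form vanishing on the line `X₁ = a X₂` is a multiple of `X₁ - a X₂` by a form. -/
lemma exists_form_of_restr_eq_zero (a : K) {j : ℕ} {F : MvPolynomial (Fin 3) K}
    (hF : F ∈ homogeneousSubmodule (Fin 3) K (j + 1)) (h : restr a F = 0) :
    ∃ G ∈ homogeneousSubmodule (Fin 3) K j, F = lineForm a * G := by
  obtain ⟨G, hG⟩ := lineForm_dvd_sub a hF
  rw [h, Polynomial.homogenize_zero, map_zero, sub_zero] at hG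
  have := DirectSum.coe_decompose_mul_add_of_left_mem (homogeneousSubmodule (Fin 3) K)
    (j := j) (b := G) (lineForm_mem a)
  rw [← hG, add_comm, DirectSum.decompose_of_mem_same _ hF] at this
  exact ⟨_, SetLike.coe_mem _, this⟩

lemma lineForm_ne_zero (a : K) : lineForm a ≠ 0 := by
  intro h
  have := congrArg (aeval (![0, 1, 0] : Fin 3 → K)) h
  simp [lineForm] at this

/-- The residual system: the members of the system containing a line that avoids all the support
points form a copy of the system in degree one less. -/
lemma finrank_sys_inf_ker_succ [CharZero K] (t : ℕ → K) (s j : ℕ) :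
    finrank K ↥(sys t s (j + 1) ⊓ LinearMap.ker (restr (s : K)).toLinearMap) =
      finrank K (sys t s j) := by
  have hinj : Function.Injective (LinearMap.mulLeft K (lineForm (s : K))) :=
    mul_right_injective₀ (lineForm_ne_zero _)
  rw [(Submodule.equivMapOfInjective _ hinj (sys t s j)).finrank_eq]
  suffices h : sys t s (j + 1) ⊓ LinearMap.ker (restr (s : K)).toLinearMap =
      (sys t s j).map (LinearMap.mulLeft K (lineForm (s : K))) by rw [h]
  ext F
  simp only [Submodule.mem_inf, Submodule.mem_map, LinearMap.mulLeft_apply, LinearMap.mem_ker,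
    mem_sys, AlgHom.toLinearMap_apply]
  constructor
  · rintro ⟨⟨hF, hv⟩, h0⟩
    obtain ⟨G, hG, rfl⟩ := exists_form_of_restr_eq_zero _ hF h0
    refine ⟨G, ⟨hG, fun i hi => ?_⟩, rfl⟩
    have := hv i hi
    have hne : (i : K) - s ≠ 0 := sub_ne_zero.2 (by exact_mod_cast hi.ne)
    rwa [map_mul, restr_lineForm, Polynomial.dvd_C_mul hne] at this
  · rintro ⟨G, ⟨hG, hv⟩, rfl⟩
    refine ⟨⟨?_, fun i hi => ?_⟩, ?_⟩
    · rw [add_comm]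
      exact IsHomogeneous.mul (lineForm_mem _) hG
    · rw [map_mul]
      exact (hv i hi).mul_left _
    · rw [map_mul, restr_lineForm, sub_self, Polynomial.C_0, zero_mul]

lemma finrank_sys_inf_ker_zero (t : ℕ → K) (s : ℕ) (a : K) :
    finrank K ↥(sys t s 0 ⊓ LinearMap.ker (restr a).toLinearMap) = 0 := by
  rw [Submodule.finrank_eq_zero, eq_bot_iff]
  rintro F ⟨hF, h0⟩
  have hF0 := (mem_sys.1 hF).1
  rw [homogeneousSubmodule_zero] at hF0
  obtain ⟨c, rfl⟩ := Submodule.mem_one.1 hF0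
  have : Polynomial.C c = 0 := by simpa [restr] using h0
  rw [Polynomial.C_eq_zero] at this
  simp [this]

/-- Dimension recursion for adding a flat fat point to the system. -/
lemma finrank_sys_succ (t : ℕ → K) (s j : ℕ)
    (h : finrank K ↥((sys t s j).map (restr (s : K)).toLinearMap ⊓ LinearMap.ker (jet (t s))) =
      finrank K ((sys t s j).map (restr (s : K)).toLinearMap) - 3) :
    finrank K (sys t (s + 1) j) =
      (finrank K (sys t s j) -
        finrank K ↥(sys t s j ⊓ LinearMap.ker (restr (s : K)).toLinearMap) - 3) +
        finrank K ↥(sys t s j ⊓ LinearMap.ker (restr (s : K)).toLinearMap) := by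
  have e : sys t (s + 1) j =
      sys t s j ⊓ (LinearMap.ker (jet (t s))).comap (restr (s : K)).toLinearMap := by
    ext F
    simp only [Submodule.mem_inf, mem_sys, Submodule.mem_comap, mem_ker_jet,
      AlgHom.toLinearMap_apply, Nat.lt_succ_iff_lt_or_eq]
    constructor
    · rintro ⟨h1, h2⟩
      exact ⟨⟨h1, fun i hi => h2 i (.inl hi)⟩, h2 s (.inr rfl)⟩
    · rintro ⟨⟨h1, h2⟩, h3⟩
      refine ⟨h1, fun i hi => ?_⟩
      rcases hi with hi | rfl
      exacts [h2 i hi, h3]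
  have e1 : (sys t (s + 1) j).map (restr (s : K)).toLinearMap =
      (sys t s j).map (restr (s : K)).toLinearMap ⊓ LinearMap.ker (jet (t s)) := by
    rw [e]
    ext p
    constructor
    · rintro ⟨F, ⟨hF, hp⟩, rfl⟩
      exact ⟨⟨F, hF, rfl⟩, hp⟩
    · rintro ⟨⟨F, hF, rfl⟩, hp⟩
      exact ⟨F, ⟨hF, hp⟩, rfl⟩
  have e2 : sys t (s + 1) j ⊓ LinearMap.ker (restr (s : K)).toLinearMap =
      sys t s j ⊓ LinearMap.ker (restr (s : K)).toLinearMap := by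
    rw [e, inf_assoc]
    congr 1
    refine inf_eq_right.2 fun F hF => ?_
    rw [Submodule.mem_comap, LinearMap.mem_ker.1 hF]
    exact zero_mem _
  have h1 := finrank_map_add_finrank_inf_ker (restr (s : K)).toLinearMap (sys t (s + 1) j)
  have h2 := finrank_map_add_finrank_inf_ker (restr (s : K)).toLinearMap (sys t s j)
  rw [e1, e2, h] at h1
  omega

/-- Restrictions of the system to a line grow with the degree: multiply by `X₂`. -/
lemma monotone_map_restr (t : ℕ → K) (s : ℕ) (a : K) :
    Monotone fun j => (sys t s j).map (restr a).toLinearMap := by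
  refine monotone_nat_of_le_succ fun j => ?_
  rintro _ ⟨F, hF, rfl⟩
  have h2 : ∀ b : K, restr b (X 2) = 1 := fun b => by simp [restr]
  rw [SetLike.mem_coe, mem_sys] at hF
  refine ⟨F * X 2, mem_sys.2 ⟨IsHomogeneous.mul hF.1 (isHomogeneous_X K 2), fun i hi => ?_⟩, ?_⟩
  · rw [map_mul, h2, mul_one]
    exact hF.2 i hi
  · simp [h2]

lemma choose_succ (j : ℕ) : (j + 1 + 2).choose 2 = (j + 2).choose 2 + j + 2 := by
  have : (j + 1 + 2).choose 2 = (j + 2).choose 1 + (j + 2).choose 2 := Nat.choose_succ_succ _ _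
  rw [this, Nat.choose_one_right]; omega

lemma finrank_degreeLT (n : ℕ) : finrank K (Polynomial.degreeLT K n) = n := by
  rw [(Polynomial.degreeLTEquiv K n).finrank_eq, finrank_fin_fun]

/-- With no points imposed, `sys` consists of all forms of degree `j`. -/
lemma finrank_sys_zero [CharZero K] (t : ℕ → K) (j : ℕ) :
    finrank K (sys t 0 j) = (j + 2).choose 2 := by
  classical
  have hmap : ∀ j, (sys t 0 j).map (restr ((0 : ℕ) : K)).toLinearMap =
      Polynomial.degreeLT K (j + 1) := by
    intro j
    apply le_antisymm
    · rintro _ ⟨F, hF, rfl⟩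
      rw [Polynomial.mem_degreeLT]
      have := natDegree_restr_le ((0 : ℕ) : K) (mem_sys.1 hF).1
      exact Polynomial.degree_le_natDegree.trans_lt (by exact_mod_cast Nat.lt_succ_of_le this)
    · rw [Polynomial.degreeLT_eq_span_X_pow, Submodule.span_le]
      intro p hp
      simp only [Finset.coe_image, Set.mem_image, Finset.coe_range, Set.mem_Iio] at hp
      obtain ⟨n, hn, rfl⟩ := hp
      refine ⟨X 0 ^ n * X 2 ^ (j - n), mem_sys.2 ⟨?_, by simp⟩, by simp [restr]⟩
      have := IsHomogeneous.mul (isHomogeneous_X_pow (R := K) (0 : Fin 3) n)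
        (isHomogeneous_X_pow (2 : Fin 3) (j - n))
      rwa [Nat.add_sub_cancel' (by omega)] at this
  have hrec : ∀ j, j + 1 +
      finrank K ↥(sys t 0 j ⊓ LinearMap.ker (restr ((0 : ℕ) : K)).toLinearMap) =
        finrank K (sys t 0 j) := fun j => by
    have h := finrank_map_add_finrank_inf_ker (restr ((0 : ℕ) : K)).toLinearMap (sys t 0 j)
    rwa [hmap, finrank_degreeLT] at h
  induction j with
  | zero =>
    rw [← hrec, finrank_sys_inf_ker_zero]; rfl
  | succ j ih =>
    rw [← hrec, finrank_sys_inf_ker_succ, ih, choose_succ]; omega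

/-- The dimension of the system of curves of degree `j` through `s` general flat fat points. The
line through one point and the conic of two lines through two points are unexpected. -/
def expDim (s j : ℕ) : ℕ :=
  if (s = 1 ∧ j = 1) ∨ (s = 2 ∧ j = 2) then 1 else (j + 2).choose 2 - 3 * s

/-- The recursion of `finrank_sys_succ` in degree `0`, where the residual system is zero. -/
lemma expDim_succ_zero (s : ℕ) : expDim (s + 1) 0 = expDim s 0 - 0 - 3 + 0 := by
  simp [expDim]; omega

lemma expDim_succ_succ (s j : ℕ) :
    expDim (s + 1) (j + 1) = expDim s (j + 1) - expDim s j - 3 + expDim s j := by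
  have h := choose_succ j
  -- the two exceptional values of `expDim` only interfere in small degrees
  rcases j with _ | _ | j
  · rcases s with _ | _ | s <;> simp [expDim, Nat.choose] <;> omega
  · rcases s with _ | _ | _ | s <;> simp [expDim, Nat.choose] <;> omega
  · have hL : expDim (s + 1) (j + 1 + 1 + 1) = (j + 1 + 1 + 1 + 2).choose 2 - 3 * (s + 1) :=
      if_neg (by omega)
    have hR : expDim s (j + 1 + 1 + 1) = (j + 1 + 1 + 1 + 2).choose 2 - 3 * s :=
      if_neg (by omega)
    by_cases h2 : s = 2 ∧ j = 0
    · obtain ⟨rfl, rfl⟩ := h2; decide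
    · have hR' : expDim s (j + 1 + 1) = (j + 1 + 1 + 2).choose 2 - 3 * s :=
        if_neg (by omega)
      rw [hL, hR, hR']
      omega

/-- The parameters are chosen one after the other; only `t 0, …, t (s - 1)` matter. -/
lemma exists_points [CharZero K] (s : ℕ) :
    ∃ t : ℕ → K, ∀ j, finrank K (sys t s j) = expDim s j := by
  induction s with
  | zero => exact ⟨0, fun j => by simp [finrank_sys_zero, expDim]⟩
  | succ s ih =>
    obtain ⟨t, ht⟩ := ih
    have hrk := fun j =>
      finrank_map_add_finrank_inf_ker (restr (s : K)).toLinearMap (sys t s j)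
    -- in large degree the restriction to the new line is complete
    have hM : 3 ≤ finrank K ((sys t s (3 * s + 3)).map (restr (s : K)).toLinearMap) := by
      have h1 := hrk (3 * s + 3)
      rw [finrank_sys_inf_ker_succ, ht, ht] at h1
      have h2 : (3 * s + 3 + 2).choose 2 = (3 * s + 2 + 2).choose 2 + (3 * s + 2) + 2 :=
        choose_succ _
      have h3 : (3 * s + 2 + 2).choose 2 = (3 * s + 1 + 2).choose 2 + (3 * s + 1) + 2 :=
        choose_succ _
      simp only [expDim] at h1
      rw [if_neg (by omega), if_neg (by omega)] at h1
      omega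
    obtain ⟨t₀, h₀⟩ := exists_jet_point _ (monotone_map_restr t s (s : K)) _ hM
    have hsys : ∀ j, sys (Function.update t s t₀) s j = sys t s j := by
      intro j
      ext F
      simp only [mem_sys]
      refine and_congr_right fun _ => forall₂_congr fun i hi => ?_
      rw [Function.update_of_ne hi.ne]
    refine ⟨Function.update t s t₀, fun j => ?_⟩
    rw [finrank_sys_succ _ _ _ (by rw [hsys, Function.update_self]; exact h₀ j), hsys, ht]
    rcases j with _ | j
    · rw [finrank_sys_inf_ker_zero, expDim_succ_zero]
    · rw [finrank_sys_inf_ker_succ, ht, expDim_succ_succ]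

end System

/-- A general union of `s ≥ 3` flat fat points of multiplicity `3` in `ℙ²` has
generic Hilbert function (existential formulation, via semicontinuity):
there exist `s` flat fat points of multiplicity `3` with pairwise distinct support
points, with ideals `Jᵢ = (ℓᵢ³, ℓᵢ′)`, such that `J = J₁ ∩ ⋯ ∩ J_s` satisfies
`dim_K [S/J]_j = min {3s, (j+2).choose 2}` for all `j ≥ 0`. -/
theorem stmt_4 {K : Type} [Field K] [IsAlgClosed K] [CharZero K]
    (s : ℕ) (hs : 3 ≤ s) :
    ∃ (l l' : Fin s → MvPolynomial (Fin 3) K) (v : Fin s → Fin 3 → K),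
      (∀ i, l i ∈ homogeneousSubmodule (Fin 3) K 1) ∧
      (∀ i, l' i ∈ homogeneousSubmodule (Fin 3) K 1) ∧
      (∀ i, LinearIndependent K ![l i, l' i]) ∧
      -- the support point of the `i`-th flat fat point
      (∀ i, v i ≠ 0) ∧
      (∀ i, aeval (v i) (l i) = 0 ∧ aeval (v i) (l' i) = 0) ∧
      -- pairwise distinct support points
      (∀ i j, i ≠ j → ∀ c : K, v j ≠ c • v i) ∧
      -- generic Hilbert function of the union
      (∀ j : ℕ,
        finrank K ↥(homogeneousSubmodule (Fin 3) K j) -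
          finrank K ↥(homogeneousSubmodule (Fin 3) K j ⊓
            Submodule.restrictScalars K
              ((⨅ i, Ideal.span {(l i) ^ 3, l' i} : Ideal (MvPolynomial (Fin 3) K)))) =
        min (3 * s) ((j + 2).choose 2)) := by
  obtain ⟨t, ht⟩ := exists_points (K := K) s
  refine ⟨fun i => ptForm (t i), fun i => lineForm (i : ℕ), fun i => ![t i, (i : ℕ), 1],
    fun i => ptForm_mem _, fun i => lineForm_mem _, fun i => linearIndependent_forms _ _,
    fun i h => ?_, fun i => ?_, fun i j hij c h => ?_, fun j => ?_⟩
  · simpa using congrFun h 2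
  · simp [ptForm, lineForm]
  · have h2 := congrFun h 2
    have h1 := congrFun h 1
    simp at h1 h2
    rw [← h2, one_mul] at h1
    exact hij (Fin.ext (by exact_mod_cast h1.symm))
  · have hsys : homogeneousSubmodule (Fin 3) K j ⊓ Submodule.restrictScalars K
        (⨅ i : Fin s, Ideal.span {ptForm (t i) ^ 3, lineForm ((i : ℕ) : K)} :
          Ideal (MvPolynomial (Fin 3) K)) = sys t s j := by
      ext F
      rw [Submodule.mem_inf, mem_sys]
      refine and_congr_right fun hF => ?_
      rw [Submodule.restrictScalars_mem, Submodule.mem_iInf, Fin.forall_iff]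
      exact forall₂_congr fun i hi => mem_span_iff _ _ hF
    have hA : sys t 0 j = homogeneousSubmodule (Fin 3) K j := by
      ext F; simp [mem_sys]
    rw [hsys, ht, ← hA, finrank_sys_zero, expDim, if_neg (by omega)]
    omega
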